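/- arXiv:2509.01638 — 18 statements merged into one kernel-verified Lean document; each statement's English description precedes it below -/
import Mathlib

section
/- Let R be a commutative ring, M an R-module, and K ≤ N ≤ M submodules. Then K is u-S-essential in M if and only if K is u-S-essential in N (viewing K as a submodule of the R-module N) and N is u-S-essential in M. -/
/-- `K` is a uniformly `S`-essential submodule of `M`: whenever a submodule `L`
satisfies `s₁ • (K ⊓ L) = 0` for some `s₁ ∈ S`, then `s₂ • L = 0` for some `s₂ ∈ S`. -/
def USEssential {R : Type*} [CommRing R] (S : Submonoid R) {M : Type*}
    [AddCommGroup M] [Module R M] (K : Submodule R M) : Prop :=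
  ∀ L : Submodule R M,
    (∃ s ∈ S, ∀ x ∈ K ⊓ L, s • x = 0) → ∃ s ∈ S, ∀ x ∈ L, s • x = 0

/-- Theorem (prop3 (1)): for submodules `K ≤ N ≤ M`, `K` is u-S-essential in `M` iff
`K` (viewed as a submodule of `N`) is u-S-essential in `N` and `N` is u-S-essential in `M`. -/
theorem uSEssential_iff_of_le {R : Type*} [CommRing R] [Nontrivial R] (S : Submonoid R)
    (hS0 : (0 : R) ∉ S) {M : Type*} [AddCommGroup M] [Module R M]
    (K N : Submodule R M) (hKN : K ≤ N) :
    USEssential S K ↔ USEssential S (K.comap N.subtype) ∧ USEssential S N := by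
  constructor
  · intro h
    refine ⟨?_, ?_⟩
    · -- A submodule of `N` is tested against `K` through its image in `M`.
      rintro L ⟨s, hs, hsL⟩
      obtain ⟨t, ht, htL⟩ := h (L.map N.subtype) ⟨s, hs, by
        rintro _ ⟨hxK, y, hyL, rfl⟩
        exact congrArg N.subtype (hsL y ⟨hxK, hyL⟩)⟩
      exact ⟨t, ht, fun y hy => Subtype.ext (htL y ⟨y, hy, rfl⟩)⟩
    · rintro L ⟨s, hs, hsL⟩
      exact h L ⟨s, hs, fun x hx => hsL x ⟨hKN hx.1, hx.2⟩⟩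
  · -- Essentiality of `K` in `N` annihilates `N ⊓ L` uniformly; that of `N` in `M` then handles `L`.
    rintro ⟨hK, hN⟩ L ⟨s, hs, hsL⟩
    obtain ⟨t, ht, htL⟩ := hK (L.comap N.subtype)
      ⟨s, hs, fun y hy => Subtype.ext (hsL y ⟨hy.1, hy.2⟩)⟩
    exact hN L ⟨t, ht, fun x hx => congrArg N.subtype (htL ⟨x, hx.1⟩ hx.2)⟩
end

section
/- Let R be a commutative ring, S a multiplicative subset of R, M an R-module, and H, K submodules of M. Then H ⊓ K is u-S-essential in M if and only if both H and K are u-S-essential in M. -/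
/-- Theorem (prop3 (2)): `H ⊓ K` is u-S-essential in `M` iff both `H` and `K` are
u-S-essential in `M`. -/
theorem uSEssential_inf_iff {R : Type*} [CommRing R] [Nontrivial R] (S : Submonoid R)
    (hS0 : (0 : R) ∉ S) {M : Type*} [AddCommGroup M] [Module R M] (H K : Submodule R M) :
    USEssential S (H ⊓ K) ↔ USEssential S H ∧ USEssential S K := by
  constructor
  · intro h
    exact ⟨fun L ⟨s, hs, hL⟩ => h L ⟨s, hs, fun x hx => hL x ⟨hx.1.1, hx.2⟩⟩,
      fun L ⟨s, hs, hL⟩ => h L ⟨s, hs, fun x hx => hL x ⟨hx.1.2, hx.2⟩⟩⟩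
  · rintro ⟨hH, hK⟩ L ⟨s, hs, hL⟩
    -- `H ⊓ (K ⊓ L) = (H ⊓ K) ⊓ L`, so `H` is applied to `K ⊓ L`, and then `K` to `L`.
    exact hK L (hH (K ⊓ L) ⟨s, hs, fun x hx => hL x ⟨⟨hx.1, hx.2.1⟩, hx.2.2⟩⟩)
end

section
/- Let R be a commutative ring, M an R-module, and K a submodule of M. If for every maximal ideal 𝔪 of R the submodule K is u-(R∖𝔪)-essential in M, then K is essential in M. -/
/-- `K` is an essential submodule of `M`. -/
def EssentialSub {R : Type*} [CommRing R] {M : Type*} [AddCommGroup M] [Module R M]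
    (K : Submodule R M) : Prop :=
  ∀ L : Submodule R M, K ⊓ L = ⊥ → L = ⊥

/-- Proposition: if `K` is u-(R∖𝔪)-essential for every maximal ideal `𝔪` of `R`,
then `K` is essential in `M`. -/
theorem essential_of_forall_maximal_uSEssential {R : Type*} [CommRing R] [Nontrivial R]
    {M : Type*} [AddCommGroup M] [Module R M] (K : Submodule R M)
    (h : ∀ (𝔪 : Ideal R) (hm : 𝔪.IsMaximal),
      USEssential (@Ideal.primeCompl R _ 𝔪 hm.isPrime) K) :
    EssentialSub K := by
  intro L hKL
  -- If `Ann L` were proper it would lie in a maximal ideal `𝔪`, but u-(R∖𝔪)-essentiality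
  -- applied to `L` yields an annihilator of `L` outside `𝔪`.
  rw [← Submodule.annihilator_eq_top_iff]
  by_contra hne
  obtain ⟨𝔪, hm, hle⟩ := Ideal.exists_le_maximal _ hne
  obtain ⟨s, hs, hsL⟩ := h 𝔪 hm L ⟨1, Submonoid.one_mem _, fun x hx => by
    rw [hKL, Submodule.mem_bot] at hx
    rw [hx, smul_zero]⟩
  exact hs (hle (Submodule.mem_annihilator.mpr hsL))
end

section
/- Let R be a commutative ring, S a multiplicative subset of R, and M a prime R-module. Then every essential submodule of M is u-S-essential in M. -/
/-- `M` is a prime `R`-module: every nonzero submodule has the same annihilator as `M`. -/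
def IsPrimeModule (R : Type*) [CommRing R] (M : Type*) [AddCommGroup M] [Module R M] : Prop :=
  ∀ N : Submodule R M, N ≠ ⊥ → N.annihilator = (⊤ : Submodule R M).annihilator

/-- Lemma: if `M` is a prime module, then every essential submodule of `M` is
u-S-essential. -/
theorem uSEssential_of_essential_of_primeModule {R : Type*} [CommRing R] [Nontrivial R]
    (S : Submonoid R) (hS0 : (0 : R) ∉ S) {M : Type*} [AddCommGroup M] [Module R M]
    (hM : IsPrimeModule R M) (K : Submodule R M) (hK : EssentialSub K) :
    USEssential S K := by
  rintro L ⟨s, hs, h⟩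
  by_cases hKL : K ⊓ L = ⊥
  · -- By essentiality `L = 0`, so any element of `S` kills it.
    refine ⟨1, S.one_mem, fun x hx => ?_⟩
    rw [hK L hKL, Submodule.mem_bot] at hx
    rw [hx, smul_zero]
  · -- By primeness, `s` annihilates all of `M` since it annihilates the nonzero `K ⊓ L`.
    have hsM : s ∈ (⊤ : Submodule R M).annihilator :=
      hM (K ⊓ L) hKL ▸ Submodule.mem_annihilator.mpr h
    exact ⟨s, hs, fun x _ => Submodule.mem_annihilator.mp hsM x Submodule.mem_top⟩
end

section
/- Let R be a commutative ring, M a prime R-module, and K a submodule of M. The following are equivalent: (1) K is essential in M; (2) K is u-(R∖𝔭)-essential in M for every prime ideal 𝔭 of R; (3) K is u-(R∖𝔪)-essential in M for every maximal ideal 𝔪 of R. -/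
/-- A multiplier killing `K ⊓ L` either kills all of `M` (when `K ⊓ L ≠ ⊥`, by primeness), or
`K ⊓ L = ⊥`, which forces `L = ⊥`. This works for any multiplicative set `S`. -/
theorem EssentialSub.uSEssential {R : Type*} [CommRing R] {M : Type*} [AddCommGroup M]
    [Module R M] (hM : IsPrimeModule R M) {K : Submodule R M} (hK : EssentialSub K)
    (S : Submonoid R) : USEssential S K := by
  rintro L ⟨s, hs, h⟩
  by_cases hKL : K ⊓ L = ⊥
  · refine ⟨1, S.one_mem, fun x hx => ?_⟩
    rw [hK L hKL, Submodule.mem_bot] at hx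
    rw [hx, smul_zero]
  · have hsM : s ∈ (K ⊓ L).annihilator := Submodule.mem_annihilator.mpr h
    rw [hM _ hKL] at hsM
    exact ⟨s, hs, fun x _ => Submodule.mem_annihilator.mp hsM x Submodule.mem_top⟩

/-- If `K ⊓ L = ⊥`, then the annihilator of `L` lies in no maximal ideal, so it is the unit ideal
and `L = ⊥`. -/
theorem essentialSub_of_forall_maximal {R : Type*} [CommRing R] {M : Type*} [AddCommGroup M]
    [Module R M] {K : Submodule R M}
    (h : ∀ (𝔪 : Ideal R) (hm : 𝔪.IsMaximal),
      USEssential (@Ideal.primeCompl R _ 𝔪 hm.isPrime) K) : EssentialSub K := by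
  intro L hL
  rw [← Submodule.annihilator_eq_top_iff]
  by_contra hne
  obtain ⟨𝔪, hm, hle⟩ := Ideal.exists_le_maximal _ hne
  obtain ⟨s, hs, hsL⟩ := h 𝔪 hm L ⟨1, Submonoid.one_mem _, fun x hx => by
    rw [hL, Submodule.mem_bot] at hx
    rw [hx, smul_zero]⟩
  exact hs (hle (Submodule.mem_annihilator.mpr hsL))

/-- Proposition: for a prime module `M` and `K ≤ M`, the following are equivalent:
(1) `K` is essential; (2) `K` is u-(R∖𝔭)-essential for every prime `𝔭`;
(3) `K` is u-(R∖𝔪)-essential for every maximal `𝔪`. -/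
theorem essential_iff_uSEssential_primes_of_primeModule {R : Type*} [CommRing R] [Nontrivial R]
    {M : Type*} [AddCommGroup M] [Module R M] (hM : IsPrimeModule R M) (K : Submodule R M) :
    (EssentialSub K ↔
      ∀ (𝔭 : Ideal R) (hp : 𝔭.IsPrime), USEssential (@Ideal.primeCompl R _ 𝔭 hp) K) ∧
    (EssentialSub K ↔
      ∀ (𝔪 : Ideal R) (hm : 𝔪.IsMaximal),
        USEssential (@Ideal.primeCompl R _ 𝔪 hm.isPrime) K) := by
  exact ⟨⟨fun hK _ _ => hK.uSEssential hM _,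
      fun h => essentialSub_of_forall_maximal fun 𝔪 hm => h 𝔪 hm.isPrime⟩,
    ⟨fun hK _ _ => hK.uSEssential hM _, essentialSub_of_forall_maximal⟩⟩
end

section
/- Let R be a commutative ring, S a multiplicative subset of R, and f : M → N an R-linear map of R-modules. If Q is a u-S-essential submodule of N, then the preimage f⁻¹(Q) is a u-S-essential submodule of M. -/
/-- Proposition (prop5 (1)): preimages of u-S-essential submodules under linear maps
are u-S-essential. -/
theorem uSEssential_comap {R : Type*} [CommRing R] [Nontrivial R] (S : Submonoid R)
    (hS0 : (0 : R) ∉ S) {M N : Type*} [AddCommGroup M] [Module R M]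
    [AddCommGroup N] [Module R N] (f : M →ₗ[R] N) (Q : Submodule R N)
    (hQ : USEssential S Q) :
    USEssential S (Q.comap f) := by
  rintro L ⟨s, hs, hsL⟩
  -- Every element of `Q ⊓ f(L)` lifts to `f⁻¹(Q) ⊓ L`, so `s` kills it.
  obtain ⟨t, ht, htL⟩ := hQ (L.map f) ⟨s, hs, by
    rintro _ ⟨hxQ, x, hxL, rfl⟩
    rw [← map_smul, hsL x ⟨hxQ, hxL⟩, map_zero]⟩
  refine ⟨s * t, S.mul_mem hs ht, fun x hx => ?_⟩
  -- Since `t • f(L) = 0`, `t • L` lies in `ker f ≤ f⁻¹(Q)`, hence is killed by `s`.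
  rw [mul_smul]
  refine hsL _ ⟨?_, L.smul_mem t hx⟩
  change f (t • x) ∈ Q
  rw [map_smul, htL _ (Submodule.mem_map_of_mem hx)]
  exact Q.zero_mem
end

section
/- Let R be a commutative ring, S a multiplicative subset of R, and f : M → N an R-linear map of R-modules that is a u-S-monomorphism. If K is a u-S-essential submodule of M, then the image f(K) is a u-S-essential submodule of the R-module f(M) = range f. -/
/-- `f` is a u-S-monomorphism: its kernel is u-S-torsion. -/
def IsUSMono {R : Type*} [CommRing R] (S : Submonoid R) {M N : Type*}
    [AddCommGroup M] [Module R M] [AddCommGroup N] [Module R N] (f : M →ₗ[R] N) : Prop :=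
  ∃ s ∈ S, ∀ x ∈ LinearMap.ker f, s • x = 0

/-- Proposition (prop5 (2)): if `K` is u-S-essential in `M` and `f` is a
u-S-monomorphism, then `f(K)` is u-S-essential in `f(M) = range f`. -/
theorem uSEssential_map_of_uSMono {R : Type*} [CommRing R] [Nontrivial R] (S : Submonoid R)
    (hS0 : (0 : R) ∉ S) {M N : Type*} [AddCommGroup M] [Module R M]
    [AddCommGroup N] [Module R N] (f : M →ₗ[R] N) (hf : IsUSMono S f)
    (K : Submodule R M) (hK : USEssential S K) :
    USEssential S ((K.map f).comap (LinearMap.range f).subtype) := by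
  obtain ⟨s, hs, hker⟩ := hf
  rintro L ⟨s₁, hs₁, h₁⟩
  -- Essentiality of `K` is applied to the preimage of `L`; the factor `s` kills `ker f`.
  obtain ⟨s₂, hs₂, h₂⟩ := hK (L.comap f.rangeRestrict) ⟨s * s₁, S.mul_mem hs hs₁, by
    rintro x ⟨hxK, hxL⟩
    have h := congrArg Subtype.val
      (h₁ (f.rangeRestrict x) ⟨⟨x, hxK, rfl⟩, hxL⟩)
    rw [mul_smul]
    apply hker
    rw [LinearMap.mem_ker, map_smul]
    exact h⟩
  refine ⟨s₂, hs₂, fun y hy => ?_⟩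
  obtain ⟨x, rfl⟩ := f.surjective_rangeRestrict y
  rw [← map_smul, h₂ x hy, map_zero]
end

section
/- Let R be a commutative ring, S a multiplicative subset of R, M₁ and M₂ R-modules, and Kᵢ a submodule of Mᵢ for i = 1, 2. Then K₁ ⊕ K₂ is a u-S-essential submodule of the direct sum M₁ ⊕ M₂ if and only if K₁ is u-S-essential in M₁ and K₂ is u-S-essential in M₂. -/
/-- If `s` annihilates `f⁻¹(K) ⊓ L`, then it annihilates `K ⊓ f(L)`, so some `t ∈ S` annihilates
`f(L)`; then `t • L ⊆ ker f ⊓ L ⊆ f⁻¹(K) ⊓ L`, and `s * t` annihilates `L`. -/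
theorem USEssential.comap {R : Type*} [CommRing R] {S : Submonoid R} {M N : Type*}
    [AddCommGroup M] [Module R M] [AddCommGroup N] [Module R N] {K : Submodule R N}
    (hK : USEssential S K) (f : M →ₗ[R] N) : USEssential S (K.comap f) := by
  rintro L ⟨s, hs, hsL⟩
  obtain ⟨t, ht, htL⟩ := hK (L.map f) ⟨s, hs, by
    rintro _ ⟨hxK, l, hl, rfl⟩
    rw [← map_smul, hsL l ⟨hxK, hl⟩, map_zero]⟩
  refine ⟨s * t, S.mul_mem hs ht, fun x hx => ?_⟩
  rw [mul_smul]
  refine hsL _ ⟨?_, L.smul_mem t hx⟩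
  change f (t • x) ∈ K
  rw [map_smul, htL _ (Submodule.mem_map_of_mem hx)]
  exact K.zero_mem

theorem USEssential.inf {R : Type*} [CommRing R] {S : Submonoid R} {M : Type*}
    [AddCommGroup M] [Module R M] {K K' : Submodule R M}
    (hK : USEssential S K) (hK' : USEssential S K') : USEssential S (K ⊓ K') := by
  intro L hL
  rw [inf_assoc] at hL
  exact hK' L (hK (K' ⊓ L) hL)

/-- Theorem (prop6): `K₁ ⊕ K₂` is u-S-essential in `M₁ ⊕ M₂` iff `K₁` is
u-S-essential in `M₁` and `K₂` is u-S-essential in `M₂`. -/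
theorem uSEssential_prod_iff {R : Type*} [CommRing R] [Nontrivial R] (S : Submonoid R)
    (hS0 : (0 : R) ∉ S) {M₁ M₂ : Type*} [AddCommGroup M₁] [Module R M₁]
    [AddCommGroup M₂] [Module R M₂] (K₁ : Submodule R M₁) (K₂ : Submodule R M₂) :
    USEssential S (K₁.prod K₂) ↔ USEssential S K₁ ∧ USEssential S K₂ := by
  constructor
  · intro h
    constructor
    · have h₁ := h.comap (LinearMap.inl R M₁ M₂)
      rwa [Submodule.prod_comap_inl] at h₁
    · have h₂ := h.comap (LinearMap.inr R M₁ M₂)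
      rwa [Submodule.prod_comap_inr] at h₂
  · rintro ⟨h₁, h₂⟩
    exact (h₁.comap (LinearMap.fst R M₁ M₂)).inf (h₂.comap (LinearMap.snd R M₁ M₂))
end

section
/- Let R be a commutative ring, S a multiplicative subset of R, M an R-module, and K a submodule of M. Suppose the S-torsion submodule tor_S(M) is u-S-torsion. Then K is u-S-essential in M if and only if for every x ∈ M with x ∉ tor_S(M) and every s ∈ S, there exists r ∈ R such that r • x ∈ K and s • (r • x) ≠ 0. -/
/-- Theorem (prop7): if `tor_S(M)` is u-S-torsion, then `K` is u-S-essential in `M`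
iff for every `x ∈ M ∖ tor_S(M)` and every `s ∈ S` there exists `r ∈ R` with
`r • x ∈ K` and `s • (r • x) ≠ 0`. -/
theorem uSEssential_iff_of_torsion {R : Type*} [CommRing R] [Nontrivial R] (S : Submonoid R)
    (hS0 : (0 : R) ∉ S) {M : Type*} [AddCommGroup M] [Module R M]
    (htor : ∃ s ∈ S, ∀ m : M, (∃ t ∈ S, t • m = 0) → s • m = 0)
    (K : Submodule R M) :
    USEssential S K ↔
      ∀ x : M, (¬ ∃ t ∈ S, t • x = 0) → ∀ s ∈ S,
        ∃ r : R, r • x ∈ K ∧ s • (r • x) ≠ 0 := by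
  constructor
  · intro hK x hx s hs
    by_contra! h
    obtain ⟨t, ht, hL⟩ := hK (Submodule.span R {x}) ⟨s, hs, by
      rintro y ⟨hyK, hyx⟩
      obtain ⟨r, rfl⟩ := Submodule.mem_span_singleton.mp hyx
      exact h r hyK⟩
    exact hx ⟨t, ht, hL x (Submodule.mem_span_singleton_self x)⟩
  · rintro h L ⟨s, hs, hKL⟩
    obtain ⟨t, ht, htor⟩ := htor
    refine ⟨t, ht, fun x hx => htor x ?_⟩
    by_contra hx'
    obtain ⟨r, hrK, hr⟩ := h x hx' s hs
    exact hr (hKL _ ⟨hrK, L.smul_mem r hx⟩)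
end

section
/- Let R be a commutative ring, S a multiplicative subset of R, (M_α)_{α ∈ A} a family of R-modules, and K_α a submodule of M_α for each α ∈ A. If the S-torsion submodule tor_S(⊕_{α∈A} M_α) of the direct sum is u-S-torsion and K_α is u-S-essential in M_α for every α ∈ A, then ⊕_{α∈A} K_α is a u-S-essential submodule of ⊕_{α∈A} M_α. -/
open DirectSum

/-- The direct sum `⊕ K i` of a family of submodules `K i ≤ M i`, as a submodule of
the direct sum `⨁ i, M i`. -/
def directSumSubmodule {R : Type*} [CommRing R] {ι : Type*} {M : ι → Type*}
    [∀ i, AddCommGroup (M i)] [∀ i, Module R (M i)] (K : ∀ i, Submodule R (M i)) :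
    Submodule R (⨁ i, M i) where
  carrier := {x | ∀ i, x i ∈ K i}
  zero_mem' := fun i => by simp
  add_mem' := fun {a b} ha hb i => by
    rw [DirectSum.add_apply]; exact (K i).add_mem (ha i) (hb i)
  smul_mem' := fun r x hx i => by
    rw [DFinsupp.smul_apply]; exact (K i).smul_mem r (hx i)

/-- The elementwise form of u-S-essentiality, valid when the `S`-torsion of `N` is killed by a
single element of `S`: the submodule tested is the cyclic one generated by `y`. -/
lemma exists_smul_mem_not_torsion {R : Type*} [CommRing R] {S : Submonoid R} {N : Type*}
    [AddCommGroup N] [Module R N] {P : Submodule R N} (hP : USEssential S P)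
    (htor : ∃ s ∈ S, ∀ y : N, (∃ t ∈ S, t • y = 0) → s • y = 0)
    {y : N} (hy : ¬ ∃ t ∈ S, t • y = 0) :
    ∃ r : R, r • y ∈ P ∧ ¬ ∃ t ∈ S, t • (r • y) = 0 := by
  by_contra! hcon
  obtain ⟨s, hs, hs'⟩ := htor
  obtain ⟨t, ht, ht'⟩ := hP (Submodule.span R {y}) ⟨s, hs, by
    rintro z ⟨hzP, hzy⟩
    obtain ⟨r, rfl⟩ := Submodule.mem_span_singleton.1 hzy
    exact hs' _ (hcon r hzP)⟩
  exact hy ⟨t, ht, ht' y (Submodule.mem_span_singleton_self y)⟩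

/-- Proposition: if `tor_S(⨁ i, M i)` is u-S-torsion and each `K i` is u-S-essential
in `M i`, then `⊕ K i` is u-S-essential in `⨁ i, M i`. -/
theorem uSEssential_directSum {R : Type*} [CommRing R] [Nontrivial R] (S : Submonoid R)
    (hS0 : (0 : R) ∉ S) {ι : Type*} {M : ι → Type*}
    [∀ i, AddCommGroup (M i)] [∀ i, Module R (M i)] (K : ∀ i, Submodule R (M i))
    (htor : ∃ s ∈ S, ∀ x : ⨁ i, M i, (∃ t ∈ S, t • x = 0) → s • x = 0)
    (hK : ∀ i, USEssential S (K i)) :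
    USEssential S (directSumSubmodule K) := by
  classical
  rintro L ⟨s₁, hs₁, hL⟩
  obtain ⟨s, hs, hs'⟩ := htor
  have htorM : ∀ i, ∃ s ∈ S, ∀ y : M i, (∃ t ∈ S, t • y = 0) → s • y = 0 := by
    refine fun i => ⟨s, hs, ?_⟩
    rintro y ⟨t, ht, hty⟩
    have h := hs' (DirectSum.lof R ι M i y) ⟨t, ht, by rw [← map_smul, hty, map_zero]⟩
    rw [← map_smul] at h
    rw [← DirectSum.lof_apply R i (s • y), h]
    rfl
  -- Induction on a finite set of coordinates outside of which `x` already lies in `K`.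
  have key : ∀ (F : Finset ι) (x : ⨁ i, M i), x ∈ L → (∀ i ∉ F, x i ∈ K i) →
      ∃ t ∈ S, t • x = 0 := by
    intro F
    induction F using Finset.induction_on with
    | empty => exact fun x hx hxK => ⟨s₁, hs₁, hL x ⟨fun i => hxK i (by simp), hx⟩⟩
    | insert i F _ ih =>
      intro x hx hxK
      by_contra hnt
      obtain ⟨r, hrK, hr⟩ : ∃ r : R, r • x i ∈ K i ∧ ¬ ∃ t ∈ S, t • (r • x) = 0 := by
        by_cases hxi : ∃ t ∈ S, t • x i = 0
        · obtain ⟨t, ht, htx⟩ := hxi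
          refine ⟨t, by rw [htx]; exact (K i).zero_mem, ?_⟩
          rintro ⟨u, hu, hux⟩
          exact hnt ⟨u * t, S.mul_mem hu ht, by rw [mul_smul, hux]⟩
        · obtain ⟨r, hrK, hr⟩ := exists_smul_mem_not_torsion (hK i) (htorM i) hxi
          refine ⟨r, hrK, ?_⟩
          rintro ⟨u, hu, hux⟩
          have h := congrArg (fun z : ⨁ i, M i => z i) hux
          exact hr ⟨u, hu, h⟩
      refine hr (ih (r • x) (L.smul_mem r hx) fun j hj => ?_)
      change r • x j ∈ K j
      by_cases hji : j = i
      · subst hji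
        exact hrK
      · exact (K j).smul_mem r (hxK j (by simp [hji, hj]))
  refine ⟨s, hs, fun x hx => hs' x (key (DFinsupp.support x) x hx fun i hi => ?_)⟩
  rw [DFinsupp.notMem_support_iff.1 hi]
  exact (K i).zero_mem
end

section
/- Let R be a commutative ring, S a multiplicative subset of R, and M an R-module such that tor_S(M) is u-S-torsion. For every submodule K of M there exists a submodule K' of M that is maximal (with respect to inclusion) among submodules N of M such that K ⊓ N is u-S-torsion; moreover, any such K' satisfies: (1) K + K' is u-S-essential in M, and (2) the submodule (K + K')/K' of M/K' is u-S-essential in M/K'. -/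
/-- A submodule `N` of `M` is u-S-torsion: `s • N = 0` for some `s ∈ S`. -/
def IsUSTorsionSub {R : Type*} [CommRing R] (S : Submonoid R) {M : Type*}
    [AddCommGroup M] [Module R M] (N : Submodule R M) : Prop :=
  ∃ s ∈ S, ∀ x ∈ N, s • x = 0

lemma isUSTorsionSub_of_forall {R : Type*} [CommRing R] {S : Submonoid R} {M : Type*}
    [AddCommGroup M] [Module R M]
    (htor : ∃ s ∈ S, ∀ m : M, (∃ t ∈ S, t • m = 0) → s • m = 0)
    {N : Submodule R M} (h : ∀ x ∈ N, ∃ t ∈ S, t • x = 0) : IsUSTorsionSub S N := by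
  obtain ⟨s, hs, hs'⟩ := htor
  exact ⟨s, hs, fun x hx => hs' x (h x hx)⟩

/-- Theorem: if `tor_S(M)` is u-S-torsion, then for every submodule `K` of `M` there is
a submodule `K'` maximal with respect to "`K ⊓ K'` is u-S-torsion"; moreover every such
`K'` satisfies: (1) `K + K'` is u-S-essential in `M`, and
(2) `(K + K')/K'` is u-S-essential in `M/K'`. -/
theorem exists_maximal_uSTorsion_inter {R : Type*} [CommRing R] [Nontrivial R]
    (S : Submonoid R) (hS0 : (0 : R) ∉ S) {M : Type*} [AddCommGroup M] [Module R M]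
    (htor : ∃ s ∈ S, ∀ m : M, (∃ t ∈ S, t • m = 0) → s • m = 0)
    (K : Submodule R M) :
    (∃ K' : Submodule R M, Maximal (fun N => IsUSTorsionSub S (K ⊓ N)) K') ∧
    ∀ K' : Submodule R M, Maximal (fun N => IsUSTorsionSub S (K ⊓ N)) K' →
      USEssential S (K ⊔ K') ∧ USEssential S ((K ⊔ K').map K'.mkQ) := by
  constructor
  · refine zorn_le₀ {N : Submodule R M | IsUSTorsionSub S (K ⊓ N)} fun c hc hchain => ?_
    rcases c.eq_empty_or_nonempty with rfl | hne
    · exact ⟨⊥, ⟨1, S.one_mem, by simp⟩, by simp⟩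
    · refine ⟨sSup c, isUSTorsionSub_of_forall htor ?_, fun z hz => le_sSup hz⟩
      rintro x ⟨hxK, hx⟩
      obtain ⟨N, hN, hxN⟩ := (Submodule.mem_sSup_of_directed hne hchain.directedOn).1 hx
      obtain ⟨t, ht, h⟩ := hc hN
      exact ⟨t, ht, h x ⟨hxK, hxN⟩⟩
  · intro K' hK'
    obtain ⟨t, ht, htK⟩ := hK'.prop
    constructor
    · rintro L ⟨s, hs, hsL⟩
      have hP : IsUSTorsionSub S (K ⊓ (K' ⊔ L)) := by
        refine ⟨t * s, S.mul_mem ht hs, ?_⟩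
        rintro x ⟨hxK, hx⟩
        obtain ⟨k, hk, l, hl, rfl⟩ := Submodule.mem_sup.1 hx
        -- `l = (k + l) - k` lies in `K ⊔ K'`, hence is killed by `s`.
        have hl' : l ∈ K ⊔ K' := by
          have := Submodule.sub_mem _ (Submodule.mem_sup_left (T := K') hxK)
            (Submodule.mem_sup_right (S := K) hk)
          simpa using this
        have hsx : s • (k + l) = s • k := by rw [smul_add, hsL l ⟨hl', hl⟩, add_zero]
        rw [mul_smul]
        exact htK _ ⟨K.smul_mem s hxK, hsx ▸ K'.smul_mem s hk⟩
      have hLK : L ≤ K' := le_sup_right.trans (hK'.2 hP le_sup_left)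
      exact ⟨s, hs, fun x hx => hsL x ⟨Submodule.mem_sup_right (hLK hx), hx⟩⟩
    · rintro L ⟨s, hs, hsL⟩
      have hP : IsUSTorsionSub S (K ⊓ L.comap K'.mkQ) := by
        refine ⟨t * s, S.mul_mem ht hs, ?_⟩
        rintro x ⟨hxK, hx⟩
        have h := hsL (K'.mkQ x)
          ⟨Submodule.mem_map_of_mem (Submodule.mem_sup_left hxK), hx⟩
        rw [← map_smul, Submodule.mkQ_apply, Submodule.Quotient.mk_eq_zero] at h
        rw [mul_smul]
        exact htK _ ⟨K.smul_mem s hxK, h⟩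
      have hle := hK'.2 hP (Submodule.le_comap_mkQ K' L)
      refine ⟨1, S.one_mem, fun y hy => ?_⟩
      obtain ⟨x, rfl⟩ := K'.mkQ_surjective y
      rw [one_smul, Submodule.mkQ_apply, Submodule.Quotient.mk_eq_zero]
      exact hle hy
end

section
/- Let R be a commutative ring and S a multiplicative subset of R. Let f : A → B and g : A → C be u-S-monomorphisms of R-modules and φ : B → C a u-S-isomorphism such that φ ∘ f = g. Then f is u-S-essential if and only if g is u-S-essential. -/
/-- `f` is a u-S-epimorphism: its cokernel is u-S-torsion. -/
def IsUSEpi {R : Type*} [CommRing R] (S : Submonoid R) {M N : Type*}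
    [AddCommGroup M] [Module R M] [AddCommGroup N] [Module R N] (f : M →ₗ[R] N) : Prop :=
  ∃ s ∈ S, ∀ y : N, s • y ∈ LinearMap.range f

/-- `f` is a u-S-isomorphism: both a u-S-monomorphism and a u-S-epimorphism. -/
def IsUSIso {R : Type*} [CommRing R] (S : Submonoid R) {M N : Type*}
    [AddCommGroup M] [Module R M] [AddCommGroup N] [Module R N] (f : M →ₗ[R] N) : Prop :=
  IsUSMono S f ∧ IsUSEpi S f

/-- Lemma (lem4): if `f : A → B` and `g : A → C` are u-S-monomorphisms, `φ : B → C` is a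
u-S-isomorphism, and `φ ∘ f = g`, then `f` is u-S-essential iff `g` is u-S-essential. -/
theorem uSEssential_iff_of_uSIso_comp {R : Type*} [CommRing R] [Nontrivial R]
    (S : Submonoid R) (hS0 : (0 : R) ∉ S) {A B C : Type*}
    [AddCommGroup A] [Module R A] [AddCommGroup B] [Module R B] [AddCommGroup C] [Module R C]
    (f : A →ₗ[R] B) (g : A →ₗ[R] C) (φ : B →ₗ[R] C)
    (hf : IsUSMono S f) (hg : IsUSMono S g) (hφ : IsUSIso S φ) (hcomp : φ ∘ₗ f = g) :
    USEssential S (LinearMap.range f) ↔ USEssential S (LinearMap.range g) := by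
  obtain ⟨⟨t, htS, ht⟩, u, huS, hu⟩ := hφ
  subst hcomp
  constructor
  · rintro h L ⟨s, hsS, hs⟩
    obtain ⟨r, hrS, hr⟩ := h (L.comap φ) ⟨t * s, S.mul_mem htS hsS, by
      rintro _ ⟨⟨a, rfl⟩, ha⟩
      rw [mul_smul]
      refine ht _ ?_
      rw [LinearMap.mem_ker, map_smul]
      exact hs _ ⟨⟨a, rfl⟩, ha⟩⟩
    refine ⟨r * u, S.mul_mem hrS huS, fun y hy => ?_⟩
    obtain ⟨b, hb⟩ := hu y
    have hbL : b ∈ L.comap φ := by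
      rw [Submodule.mem_comap, hb]
      exact L.smul_mem u hy
    rw [mul_smul, ← hb, ← map_smul, hr b hbL, map_zero]
  · rintro h L ⟨s, hsS, hs⟩
    obtain ⟨r, hrS, hr⟩ := h (L.map φ) ⟨s * t, S.mul_mem hsS htS, by
      rintro _ ⟨⟨a, rfl⟩, l, hl, hla⟩
      -- `f a` and `l` have the same image under `φ`, so they agree after multiplication by `t`.
      have hfl : t • f a = t • l := by
        rw [← sub_eq_zero, ← smul_sub]
        refine ht _ ?_
        rw [LinearMap.mem_ker, map_sub, hla, LinearMap.comp_apply, sub_self]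
      have h0 : s • t • f a = 0 :=
        hs _ ⟨⟨t • a, map_smul f t a⟩, hfl ▸ L.smul_mem t hl⟩
      rw [LinearMap.comp_apply, mul_smul, ← map_smul, ← map_smul, h0, map_zero]⟩
    refine ⟨t * r, S.mul_mem htS hrS, fun x hx => ?_⟩
    rw [mul_smul]
    refine ht _ ?_
    rw [LinearMap.mem_ker, map_smul]
    exact hr _ ⟨x, hx, rfl⟩
end

section
/- Let R be a commutative ring, S a multiplicative subset of R, M an R-module, and E a u-S-injective R-module. An R-linear map f : M → E is a u-S-injective u-S-preenvelope of M (i.e., for every u-S-injective R-module E' there exists s ∈ S such that for every R-linear map h : M → E' there is an R-linear map g : E → E' with s • h = g ∘ f) if and only if f is a u-S-monomorphism. -/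
/-!
If `f` is a u-S-monomorphism, the preenvelope property is the definition of u-S-injectivity
of the test module `E'`, applied to `f`. Conversely, embed `M` into an injective module `J` by
some `ι`. Injective modules are u-S-injective (`isUSInjective_of_injective`), so `s • ι` factors
through `f` for some `s ∈ S`; hence `s • x` is killed by `ι`, i.e. vanishes, for every
`x ∈ ker f`.
-/

universe u

/-- `E` is u-S-injective: for every u-S-monomorphism `f : A → B` there is `s ∈ S` such
that every `h : A → E` factors as `s • h = g ∘ f` for some `g : B → E`. -/
def IsUSInjective {R : Type u} [CommRing R] (S : Submonoid R) (E : Type u)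
    [AddCommGroup E] [Module R E] : Prop :=
  ∀ (A B : Type u) [AddCommGroup A] [Module R A] [AddCommGroup B] [Module R B]
    (f : A →ₗ[R] B), IsUSMono S f →
      ∃ s ∈ S, ∀ h : A →ₗ[R] E, ∃ g : B →ₗ[R] E, s • h = g ∘ₗ f

/-- If `s` kills `ker f`, then `s • h` factors through `A ⧸ ker f`, which embeds into `B`. -/
lemma isUSInjective_of_injective {R : Type u} [CommRing R] (S : Submonoid R) (J : Type u)
    [AddCommGroup J] [Module R J] (hJ : Module.Injective R J) : IsUSInjective S J := by
  intro A B _ _ _ _ f ⟨s, hs, hker⟩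
  refine ⟨s, hs, fun h => ?_⟩
  have hle : LinearMap.ker f ≤ LinearMap.ker (s • h) := fun x hx => by
    rw [LinearMap.mem_ker, LinearMap.smul_apply, ← map_smul, hker x hx, map_zero]
  have hinj : Function.Injective ((LinearMap.ker f).liftQ f le_rfl) :=
    LinearMap.ker_eq_bot.1 (Submodule.ker_liftQ_eq_bot _ _ le_rfl le_rfl)
  obtain ⟨g, hg⟩ := hJ.out _ hinj ((LinearMap.ker f).liftQ (s • h) hle)
  refine ⟨g, LinearMap.ext fun x => ?_⟩
  simpa using (hg (Submodule.Quotient.mk x)).symm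

lemma exists_injective_embedding {R : Type u} [CommRing R] (M : Type u)
    [AddCommGroup M] [Module R M] :
    ∃ (J : Type u) (_ : AddCommGroup J) (_ : Module R J) (ι : M →ₗ[R] J),
      Module.Injective R J ∧ Function.Injective ι := by
  let X := ModuleCat.of R M
  let J := CategoryTheory.Injective.under X
  have : CategoryTheory.Injective (ModuleCat.of R J) :=
    inferInstanceAs (CategoryTheory.Injective J)
  exact ⟨J, inferInstance, inferInstance, (CategoryTheory.Injective.ι X).hom,
    Module.injective_module_of_injective_object R J,
    (ModuleCat.mono_iff_injective (CategoryTheory.Injective.ι X)).1 inferInstance⟩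

/-- Proposition (propn1 (1)): for `E` u-S-injective, `f : M → E` is a u-S-injective
u-S-preenvelope of `M` iff `f` is a u-S-monomorphism. -/
theorem uSInjPreenvelope_iff_uSMono {R : Type u} [CommRing R] [Nontrivial R]
    (S : Submonoid R) (hS0 : (0 : R) ∉ S) {M E : Type u} [AddCommGroup M] [Module R M]
    [AddCommGroup E] [Module R E] (hE : IsUSInjective S E) (f : M →ₗ[R] E) :
    (∀ (E' : Type u) [AddCommGroup E'] [Module R E'], IsUSInjective S E' →
        ∃ s ∈ S, ∀ h : M →ₗ[R] E', ∃ g : E →ₗ[R] E', s • h = g ∘ₗ f)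
      ↔ IsUSMono S f := by
  constructor
  · intro H
    obtain ⟨J, _, _, ι, hJ, hι⟩ := exists_injective_embedding (R := R) M
    obtain ⟨s, hs, hfac⟩ := H J (isUSInjective_of_injective S J hJ)
    obtain ⟨g, hg⟩ := hfac ι
    refine ⟨s, hs, fun x hx => hι ?_⟩
    have hgx := LinearMap.congr_fun hg x
    rw [LinearMap.smul_apply, LinearMap.comp_apply, LinearMap.mem_ker.1 hx, map_zero] at hgx
    rw [map_smul, hgx, map_zero]
  · intro hf E' _ _ hE'
    exact hE' M E f hf
end

section
/- Let R be a commutative ring, S a multiplicative subset of R, M an R-module, and f : M → E a u-S-monomorphism with E u-S-injective. Then f is a u-S-injective u-S-envelope of M if and only if range f is a u-S-essential submodule of E. -/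
/-!
As `E` is u-S-injective, every map `A → E` extends, after multiplication by some `t ∈ S`, along
any u-S-monomorphism out of `A`; both directions rest on choosing the right u-S-monomorphism.

If `f` is an envelope and `L` meets `range f` in a u-S-torsion module, then `M → E → E ⧸ L` is
still a u-S-monomorphism, so `t • f` extends to an endomorphism of `E` factoring through `E ⧸ L`.
That endomorphism is a u-S-isomorphism whose kernel contains `L`, so `L` is u-S-torsion.

Conversely, let `range f` be u-S-essential and `α ∘ f = s • f`. A map which is injective up to `S`
on `range f` is a u-S-monomorphism (`USEssential.isUSMono`), so `α` is one, and u-S-injectivity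
gives `g` with `g ∘ α = t • id`. The same criterion makes `g` a u-S-monomorphism, and since
`g ∘ (α ∘ g - t • id) = 0`, the maps `α ∘ g` and `t • id` agree up to `S`, so `α` is a
u-S-epimorphism.
-/

universe u

/-- `f : M → E` with `E` u-S-injective is a u-S-injective u-S-preenvelope of `M`:
for every u-S-injective `E'` there is `s ∈ S` such that every `h : M → E'` factors
as `s • h = g ∘ f` for some `g : E → E'`. -/
def USInjPreenvelope {R : Type u} [CommRing R] (S : Submonoid R) {M E : Type u}
    [AddCommGroup M] [Module R M] [AddCommGroup E] [Module R E] (f : M →ₗ[R] E) : Prop :=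
  IsUSInjective S E ∧
    ∀ (E' : Type u) [AddCommGroup E'] [Module R E'], IsUSInjective S E' →
      ∃ s ∈ S, ∀ h : M →ₗ[R] E', ∃ g : E →ₗ[R] E', s • h = g ∘ₗ f

/-- A u-S-injective u-S-preenvelope `f : M → E` is a u-S-injective u-S-envelope if every
endomorphism `α` of `E` with `s • f = α ∘ f` for some `s ∈ S` is a u-S-isomorphism. -/
def USInjEnvelope {R : Type u} [CommRing R] (S : Submonoid R) {M E : Type u}
    [AddCommGroup M] [Module R M] [AddCommGroup E] [Module R E] (f : M →ₗ[R] E) : Prop :=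
  USInjPreenvelope S f ∧
    ∀ α : E →ₗ[R] E, (∃ s ∈ S, s • f = α ∘ₗ f) → IsUSIso S α

/-- A linear map out of `E` whose kernel meets the u-S-essential submodule `K` in a module
killed by a single `s ∈ S` is a u-S-monomorphism. -/
lemma USEssential.isUSMono {R : Type*} [CommRing R] {S : Submonoid R} {E N : Type*}
    [AddCommGroup E] [Module R E] [AddCommGroup N] [Module R N] {K : Submodule R E}
    (hK : USEssential S K) (g : E →ₗ[R] N) {s : R} (hs : s ∈ S)
    (h : ∀ x ∈ K, g x = 0 → s • x = 0) : IsUSMono S g :=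
  hK (LinearMap.ker g) ⟨s, hs, fun x hx => h x hx.1 hx.2⟩

/-- Theorem (thmn1): a u-S-monomorphism `f : M → E` with `E` u-S-injective is a
u-S-injective u-S-envelope of `M` iff `range f` is a u-S-essential submodule of `E`. -/
theorem uSInjEnvelope_iff_uSEssential_range {R : Type u} [CommRing R] [Nontrivial R]
    (S : Submonoid R) (hS0 : (0 : R) ∉ S) {M E : Type u} [AddCommGroup M] [Module R M]
    [AddCommGroup E] [Module R E] (f : M →ₗ[R] E) (hf : IsUSMono S f)
    (hE : IsUSInjective S E) :
    USInjEnvelope S f ↔ USEssential S (LinearMap.range f) := by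
  constructor
  · rintro ⟨-, henv⟩ L ⟨s₁, hs₁, h₁⟩
    obtain ⟨s₀, hs₀, h₀⟩ := hf
    have hmono : IsUSMono S (L.mkQ ∘ₗ f) := by
      refine ⟨s₀ * s₁, S.mul_mem hs₀ hs₁, fun m hm => ?_⟩
      have hmL : f m ∈ L := by simpa using hm
      have hker : s₁ • m ∈ LinearMap.ker f := by
        rw [LinearMap.mem_ker, map_smul]
        exact h₁ _ ⟨⟨m, rfl⟩, hmL⟩
      rw [mul_smul]
      exact h₀ _ hker
    obtain ⟨t, ht, hext⟩ := hE _ _ _ hmono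
    obtain ⟨g, hg⟩ := hext f
    obtain ⟨⟨r, hr, hker⟩, -⟩ := henv (g ∘ₗ L.mkQ) ⟨t, ht, hg⟩
    refine ⟨r, hr, fun x hx => hker x ?_⟩
    have hx0 : L.mkQ x = 0 := by simpa using hx
    rw [LinearMap.mem_ker, LinearMap.comp_apply, hx0, map_zero]
  · intro hess
    refine ⟨⟨hE, fun E' _ _ hE' => hE' M E f hf⟩, ?_⟩
    rintro α ⟨s, hs, hα⟩
    have hα' : ∀ m, s • f m = α (f m) := fun m => LinearMap.congr_fun hα m
    have hαmono : IsUSMono S α := by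
      refine hess.isUSMono α hs ?_
      rintro _ ⟨m, rfl⟩ h
      rw [hα', h]
    obtain ⟨t, ht, hext⟩ := hE _ _ α hαmono
    obtain ⟨g, hg⟩ := hext LinearMap.id
    have hg' : ∀ x, t • x = g (α x) := fun x => LinearMap.congr_fun hg x
    obtain ⟨r, hr, hker⟩ : IsUSMono S g := by
      refine hess.isUSMono g ht ?_
      rintro _ ⟨m, rfl⟩ h
      rw [hg', ← hα', map_smul, h, smul_zero]
    refine ⟨hαmono, r * t, S.mul_mem hr ht, fun y => ⟨r • g y, ?_⟩⟩
    have hy : α (g y) - t • y ∈ LinearMap.ker g := by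
      rw [LinearMap.mem_ker, map_sub, map_smul, ← hg', sub_self]
    have hry := hker _ hy
    rw [smul_sub, sub_eq_zero] at hry
    rw [map_smul, hry, mul_smul]
end

section
/- Let R be a commutative ring, S a multiplicative subset of R, and M an R-module. If f : M → E and f' : M → E' are both u-S-injective u-S-envelopes of M, then there is a u-S-isomorphism from E to E'. -/
/-!
The preenvelope properties give `g : E → E'` and `k : E' → E` with `s • f' = g ∘ f` and
`t • f = k ∘ f'`. Then `k ∘ g` and `g ∘ k` restrict to multiplication by `s * t` along `f` and
`f'`, so both are u-S-isomorphisms by the envelope property. The first makes `g` a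
u-S-monomorphism, the second makes it a u-S-epimorphism.
-/

universe u

/-- Proposition (prop9): any two u-S-injective u-S-envelopes of `M` are u-S-isomorphic. -/
theorem uSInjEnvelope_unique {R : Type u} [CommRing R] [Nontrivial R]
    (S : Submonoid R) (hS0 : (0 : R) ∉ S) {M E E' : Type u} [AddCommGroup M] [Module R M]
    [AddCommGroup E] [Module R E] [AddCommGroup E'] [Module R E']
    (f : M →ₗ[R] E) (f' : M →ₗ[R] E')
    (hf : USInjEnvelope S f) (hf' : USInjEnvelope S f') :
    ∃ g : E →ₗ[R] E', IsUSIso S g := by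
  obtain ⟨s, hs, hs'⟩ := hf.1.2 E' hf'.1.1
  obtain ⟨t, ht, ht'⟩ := hf'.1.2 E hf.1.1
  obtain ⟨g, hg⟩ := hs' f'
  obtain ⟨k, hk⟩ := ht' f
  have hkg : IsUSIso S (k ∘ₗ g) := hf.2 _
    ⟨s * t, S.mul_mem hs ht, by
      rw [LinearMap.comp_assoc, ← hg, LinearMap.comp_smul, ← hk, smul_smul]⟩
  have hgk : IsUSIso S (g ∘ₗ k) := hf'.2 _
    ⟨t * s, S.mul_mem ht hs, by
      rw [LinearMap.comp_assoc, ← hk, LinearMap.comp_smul, ← hg, smul_smul]⟩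
  obtain ⟨a, ha, ha'⟩ := hkg.1
  obtain ⟨b, hb, hb'⟩ := hgk.2
  -- `ker g ≤ ker (k ∘ g)` and `range (g ∘ k) ≤ range g`.
  exact ⟨g, ⟨a, ha, fun x hx => ha' x (LinearMap.ker_le_ker_comp g k hx)⟩,
    ⟨b, hb, fun y => LinearMap.range_comp_le_range k g (hb' y)⟩⟩
end

section
/- Let R be a commutative ring, S a multiplicative subset of R, M an R-module, and N a u-S-essential submodule of M with inclusion map i_N : N → M. If i : M → E is a u-S-injective u-S-envelope of M, then the composition i ∘ i_N : N → E is a u-S-injective u-S-envelope of N (in particular, E_{u-S}(N) is u-S-isomorphic to E_{u-S}(M)). -/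
/-!
The heart of the matter is that the range of a u-S-injective u-S-envelope `i : M → E` is
u-S-essential in `E` (`USInjEnvelope.range_essential`): if `L ⊓ range i` is u-S-torsion, then
`M → E → E ⧸ L` is a u-S-monomorphism, so a multiple `t • i` factors through it, and the resulting
endomorphism of `E` is a u-S-isomorphism killing `L`.

That `i` itself is a u-S-monomorphism follows by comparing it with an embedding of `M` into an
injective module, injective modules being u-S-injective. Hence `N → M → E` is a u-S-monomorphism
and a u-S-preenvelope. Let `α` be an endomorphism of `E` which is multiplication by some `s ∈ S`
on `N`. Its kernel meets `N` in a u-S-torsion module, so the two essentiality properties make `α` a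
u-S-monomorphism. By u-S-injectivity there is `β` with `β ∘ α = t • id`; then `s • β` is
multiplication by `t` on `N`, so it is a u-S-monomorphism by the same argument, and therefore so is
`β`. Since `β` kills `α (β y) - t • y` for every `y`, the map `α` is a u-S-epimorphism.
-/

universe u

theorem IsUSInjective.of_injective {R : Type u} [CommRing R] (S : Submonoid R) (E : Type u)
    [AddCommGroup E] [Module R E] (hE : Module.Injective R E) : IsUSInjective S E := by
  intro A B _ _ _ _ f ⟨s, hs, hf⟩
  refine ⟨s, hs, fun h => ?_⟩
  -- `s • h` vanishes on `ker f`, hence descends to `A ⧸ ker f`, which embeds into `B`.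
  have hk : LinearMap.ker f ≤ LinearMap.ker (s • h) := fun x hx => by
    rw [LinearMap.mem_ker, LinearMap.smul_apply, ← map_smul, hf x hx, map_zero]
  obtain ⟨g, hg⟩ := hE.out ((LinearMap.ker f).liftQ f le_rfl)
    (LinearMap.ker_eq_bot.1 (Submodule.ker_liftQ_eq_bot _ _ _ le_rfl))
    ((LinearMap.ker f).liftQ (s • h) hk)
  refine ⟨g, LinearMap.ext fun x => ?_⟩
  simpa using (hg (Submodule.Quotient.mk x)).symm

theorem USInjPreenvelope.isUSMono {R : Type u} [CommRing R] {S : Submonoid R} {M E : Type u}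
    [AddCommGroup M] [Module R M] [AddCommGroup E] [Module R E] {i : M →ₗ[R] E}
    (hi : USInjPreenvelope S i) : IsUSMono S i := by
  let J := CategoryTheory.Injective.under (ModuleCat.of R M)
  let j : M →ₗ[R] J := (CategoryTheory.Injective.ι (ModuleCat.of R M)).hom
  have hj : Function.Injective j :=
    (ModuleCat.mono_iff_injective (CategoryTheory.Injective.ι (ModuleCat.of R M))).1 inferInstance
  have : CategoryTheory.Injective (ModuleCat.of R J) :=
    CategoryTheory.Injective.injective_under (ModuleCat.of R M)
  have hJ : Module.Injective R J := Module.injective_module_of_injective_object R J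
  obtain ⟨s, hs, h⟩ := hi.2 J (IsUSInjective.of_injective S J hJ)
  obtain ⟨g, hg⟩ := h j
  refine ⟨s, hs, fun x hx => hj ?_⟩
  have hx' : s • j x = g (i x) := LinearMap.congr_fun hg x
  rw [map_smul, hx', LinearMap.mem_ker.1 hx, map_zero, map_zero]

theorem USInjEnvelope.range_essential {R : Type u} [CommRing R] {S : Submonoid R} {M E : Type u}
    [AddCommGroup M] [Module R M] [AddCommGroup E] [Module R E] {i : M →ₗ[R] E}
    (hi : USInjEnvelope S i) : USEssential S (LinearMap.range i) := by
  rintro L ⟨s, hs, hL⟩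
  obtain ⟨t, ht, hti⟩ := hi.1.isUSMono
  have hmono : IsUSMono S (L.mkQ ∘ₗ i) := by
    refine ⟨t * s, S.mul_mem ht hs, fun x hx => ?_⟩
    have hx' : i x ∈ L := by simpa using hx
    rw [mul_smul]
    apply hti
    rw [LinearMap.mem_ker, map_smul]
    exact hL _ ⟨⟨x, rfl⟩, hx'⟩
  obtain ⟨r, hr, hE⟩ := hi.1.1 M (E ⧸ L) (L.mkQ ∘ₗ i) hmono
  obtain ⟨g, hg⟩ := hE i
  obtain ⟨⟨q, hq, hker⟩, -⟩ := hi.2 (g ∘ₗ L.mkQ) ⟨r, hr, hg⟩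
  refine ⟨q, hq, fun x hx => hker x ?_⟩
  have hx0 : L.mkQ x = 0 := by simpa using hx
  rw [LinearMap.mem_ker, LinearMap.comp_apply, hx0, map_zero]

/-- An endomorphism of the envelope of `M` that is multiplication by an element of `S` on a
u-S-essential submodule of `M` is a u-S-monomorphism. -/
theorem USInjEnvelope.isUSMono_of_essential {R : Type u} [CommRing R] {S : Submonoid R}
    {M E : Type u} [AddCommGroup M] [Module R M] [AddCommGroup E] [Module R E]
    {N : Submodule R M} (hN : USEssential S N) {i : M →ₗ[R] E} (hi : USInjEnvelope S i)
    {α : E →ₗ[R] E} {s : R} (hs : s ∈ S) (hα : ∀ x ∈ N, α (i x) = s • i x) :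
    IsUSMono S α := by
  obtain ⟨t, ht, hti⟩ := hi.1.isUSMono
  obtain ⟨r, hr, hker⟩ := hN ((LinearMap.ker α).comap i) ⟨t * s, S.mul_mem ht hs, by
    rintro x ⟨hxN, hx⟩
    rw [mul_smul]
    apply hti
    rw [LinearMap.mem_ker, map_smul, ← hα x hxN]
    exact hx⟩
  refine hi.range_essential _ ⟨r, hr, ?_⟩
  rintro _ ⟨⟨x, rfl⟩, hx⟩
  rw [← map_smul, hker x hx, map_zero]

/-- Proposition (prop11 (2)): if `N` is a u-S-essential submodule of `M` and
`i : M → E` is a u-S-injective u-S-envelope of `M`, then `i ∘ i_N : N → E` is a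
u-S-injective u-S-envelope of `N` (hence `E_{u-S}(N)` is u-S-isomorphic to `E_{u-S}(M)`). -/
theorem uSInjEnvelope_comp_subtype_of_uSEssential {R : Type u} [CommRing R] [Nontrivial R]
    (S : Submonoid R) (hS0 : (0 : R) ∉ S) {M E : Type u} [AddCommGroup M] [Module R M]
    [AddCommGroup E] [Module R E] (N : Submodule R M) (hN : USEssential S N)
    (i : M →ₗ[R] E) (hi : USInjEnvelope S i) :
    USInjEnvelope S (i ∘ₗ N.subtype) := by
  obtain ⟨t, ht, hti⟩ := hi.1.isUSMono
  have hmono : IsUSMono S (i ∘ₗ N.subtype) :=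
    ⟨t, ht, fun x hx => Subtype.ext (hti x hx)⟩
  refine ⟨⟨hi.1.1, fun E' _ _ hE' => hE' N E _ hmono⟩, ?_⟩
  rintro α ⟨s, hs, hα⟩
  have hα' : ∀ x ∈ N, α (i x) = s • i x := fun x hx =>
    (LinearMap.congr_fun hα ⟨x, hx⟩).symm
  have hαm : IsUSMono S α := hi.isUSMono_of_essential hN hs hα'
  refine ⟨hαm, ?_⟩
  obtain ⟨r, hr, hE⟩ := hi.1.1 E E α hαm
  obtain ⟨β, hβ⟩ := hE LinearMap.id
  have hβα : ∀ y, β (α y) = r • y := fun y => (LinearMap.congr_fun hβ y).symm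
  obtain ⟨q, hq, hker⟩ : IsUSMono S (s • β) := by
    refine hi.isUSMono_of_essential hN hr fun x hx => ?_
    rw [LinearMap.smul_apply, ← map_smul, ← hα' x hx, hβα]
  refine ⟨q * r, S.mul_mem hq hr, fun y => ⟨q • β y, ?_⟩⟩
  have h := hker (α (β y) - r • y) (by
    rw [LinearMap.mem_ker, LinearMap.smul_apply, map_sub, hβα, map_smul, sub_self, smul_zero])
  rw [smul_sub, sub_eq_zero] at h
  rw [map_smul, h, mul_smul]
end

section
/- Let R be a commutative ring, S a multiplicative subset of R, and M₁, …, Mₙ a finite family of R-modules. If fᵢ : Mᵢ → Eᵢ is a u-S-injective u-S-envelope of Mᵢ for each i = 1, …, n, then the direct sum map ⊕ᵢ fᵢ : ⊕ᵢ₌₁ⁿ Mᵢ → ⊕ᵢ₌₁ⁿ Eᵢ is a u-S-injective u-S-envelope of ⊕ᵢ₌₁ⁿ Mᵢ; in particular, E_{u-S}(⊕ᵢ₌₁ⁿ Mᵢ) is u-S-isomorphic to ⊕ᵢ₌₁ⁿ E_{u-S}(Mᵢ). -/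
/-!
The map `F = ⊕ᵢ fᵢ` is a u-S-preenvelope componentwise: finitely many elements `sᵢ ∈ S` have
the common multiple `∏ sᵢ ∈ S`.

For the envelope property, let `α ∘ F = s • F`. It is enough to find `β` and `t ∈ S` with
`β ∘ α = t` (`exists_left_inverse_pi`): then `(s • β) ∘ F = t • F`, so `s • β` has a left inverse
up to `S` as well, and the usual argument shows that these one-sided inverses are two-sided.

The left inverse comes from Gaussian elimination on the block matrix of `α`. Suppose `γ = β ∘ α`
satisfies `γ ∘ F = s • F` and already agrees with `s` on the summands in a set `T`. For `k ∉ T`,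
the diagonal block `γₖₖ` satisfies `γₖₖ ∘ fₖ = s • fₖ`, so it is a u-S-isomorphism and has a left
inverse `a` up to some `t ∈ S`. With `ιₖ`, `πₖ` the inclusion and projection of the `k`-th summand,
the row operation `γ' = (t * s) • γ - (γ - s) ∘ ιₖ ∘ (s • a) ∘ πₖ ∘ γ` agrees with `s * s * t`
on the summands in `T ∪ {k}`, and still `γ' ∘ F = (s * s * t) • F` because `γ - s` vanishes on
the range of `F`.
-/

universe u

/-- A u-S-monomorphism and u-S-epimorphism has a left inverse up to an element of `S`. -/
lemma IsUSIso.exists_left_inverse {R : Type*} [CommRing R] {S : Submonoid R} {M N : Type*}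
    [AddCommGroup M] [Module R M] [AddCommGroup N] [Module R N] {α : M →ₗ[R] N}
    (h : IsUSIso S α) : ∃ t ∈ S, ∃ b : N →ₗ[R] M, ∀ x, b (α x) = t • x := by
  obtain ⟨⟨s, hs, hker⟩, ⟨t, ht, hran⟩⟩ := h
  choose g hg using hran
  -- `g` is linear only modulo the kernel of `α`, which `s` annihilates.
  have key : ∀ x y, α x = α y → s • x = s • y := fun x y hxy => by
    rw [← sub_eq_zero, ← smul_sub]
    exact hker _ (by simp [hxy])
  refine ⟨s * t, S.mul_mem hs ht,
    { toFun := fun y => s • g y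
      map_add' := fun x y => ?_
      map_smul' := fun r x => ?_ }, fun x => ?_⟩
  · rw [← smul_add]
    exact key _ _ (by simp [hg])
  · rw [RingHom.id_apply, smul_comm r s]
    exact key _ _ (by simp [hg, smul_comm r t])
  · rw [mul_smul]
    exact key _ _ (by simp [hg])

section FiniteFamily

variable {R : Type u} [CommRing R] {S : Submonoid R} {n : ℕ} {M E : Fin n → Type u}
  [∀ i, AddCommGroup (M i)] [∀ i, Module R (M i)]
  [∀ i, AddCommGroup (E i)] [∀ i, Module R (E i)]

lemma IsUSInjective.pi (hE : ∀ i, IsUSInjective S (E i)) : IsUSInjective S (∀ i, E i) := by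
  intro A B _ _ _ _ φ hφ
  choose s hs hext using fun i => hE i A B φ hφ
  choose c hc using fun i => Finset.dvd_prod_of_mem s (Finset.mem_univ i)
  refine ⟨∏ i, s i, S.prod_mem fun i _ => hs i, fun h => ?_⟩
  choose g hg using fun i => hext i (LinearMap.proj i ∘ₗ h)
  refine ⟨LinearMap.pi fun i => c i • g i, ?_⟩
  ext x i
  have := LinearMap.congr_fun (hg i) x
  simp only [LinearMap.smul_apply, LinearMap.comp_apply, LinearMap.proj_apply] at this
  simp only [LinearMap.smul_apply, LinearMap.comp_apply, LinearMap.pi_apply, Pi.smul_apply,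
    ← this]
  rw [hc i, mul_comm, mul_smul]

lemma USInjPreenvelope.pi {f : ∀ i, M i →ₗ[R] E i} (hf : ∀ i, USInjPreenvelope S (f i)) :
    USInjPreenvelope S
      (LinearMap.pi (fun i => (f i) ∘ₗ LinearMap.proj i) : (∀ i, M i) →ₗ[R] ∀ i, E i) := by
  refine ⟨IsUSInjective.pi fun i => (hf i).1, fun E' _ _ hE' => ?_⟩
  choose s hs hext using fun i => (hf i).2 E' hE'
  choose c hc using fun i => Finset.dvd_prod_of_mem s (Finset.mem_univ i)
  refine ⟨∏ i, s i, S.prod_mem fun i _ => hs i, fun h => ?_⟩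
  choose g hg using fun i => hext i (h ∘ₗ LinearMap.single R M i)
  refine ⟨∑ i, (c i • g i) ∘ₗ LinearMap.proj i, ?_⟩
  refine LinearMap.ext fun m => ?_
  have hgm : ∀ i, g i (f i (m i)) = s i • h (Pi.single i (m i)) := fun i =>
    (LinearMap.congr_fun (hg i) (m i)).symm
  have hm : h m = ∑ i, h (Pi.single i (m i)) := by
    rw [← map_sum, Finset.univ_sum_single]
  simp only [LinearMap.smul_apply, LinearMap.comp_apply, LinearMap.sum_apply,
    LinearMap.proj_apply, LinearMap.pi_apply, hgm]
  rw [hm, Finset.smul_sum]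
  refine Finset.sum_congr rfl fun i _ => ?_
  rw [← mul_smul, mul_comm, ← hc i]

/-- Gaussian elimination: after composing `α` with a suitable `β` on the left, the result acts as
a scalar of `S` on the summands in `T`, while still acting as that scalar on the range of `⊕ fᵢ`. -/
lemma exists_left_inverse_on {f : ∀ i, M i →ₗ[R] E i} (hf : ∀ i, USInjEnvelope S (f i))
    {α : (∀ i, E i) →ₗ[R] ∀ i, E i} {s : R} (hs : s ∈ S)
    (hα : ∀ m : ∀ i, M i, α (fun i => f i (m i)) = s • fun i => f i (m i))
    (T : Finset (Fin n)) :
    ∃ t ∈ S, ∃ β : (∀ i, E i) →ₗ[R] ∀ i, E i,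
      (∀ m : ∀ i, M i, β (α (fun i => f i (m i))) = t • fun i => f i (m i)) ∧
      ∀ j ∈ T, ∀ x, β (α (Pi.single j x)) = t • Pi.single j x := by
  induction T using Finset.induction_on with
  | empty => exact ⟨s, hs, LinearMap.id, hα, by simp⟩
  | insert k T hk ih =>
    obtain ⟨s, hs, β, hF, hT⟩ := ih
    -- Apply `hF` to a vector concentrated in the `k`-th summand.
    have hFk : ∀ x, β (α (Pi.single k (f k x))) = s • Pi.single k (f k x) := fun x => by
      have := hF (Pi.single k x)
      rwa [show (fun i => f i ((Pi.single k x : ∀ i, M i) i)) = Pi.single k (f k x) from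
        funext fun i => Pi.apply_single (fun i => f i) (fun i => map_zero _) k x i] at this
    obtain ⟨t, ht, a, ha⟩ := ((hf k).2
      (LinearMap.proj k ∘ₗ β ∘ₗ α ∘ₗ LinearMap.single R E k)
      ⟨s, hs, by ext x; simp [hFk]⟩).exists_left_inverse
    simp only [LinearMap.comp_apply, LinearMap.proj_apply, LinearMap.single_apply] at ha
    have haf : ∀ x, s • a (f k x) = t • f k x := fun x => by
      rw [← ha, hFk, Pi.smul_apply, Pi.single_eq_same, map_smul]
    refine ⟨s * s * t, S.mul_mem (S.mul_mem hs hs) ht,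
      (t * s) • β - (β ∘ₗ α - s • LinearMap.id) ∘ₗ LinearMap.single R E k ∘ₗ (s • a) ∘ₗ
        LinearMap.proj k ∘ₗ β, fun m => ?_, fun j hj x => ?_⟩
    · simp only [LinearMap.sub_apply, LinearMap.smul_apply, LinearMap.comp_apply,
        LinearMap.proj_apply, LinearMap.single_apply, LinearMap.id_apply, hF,
        map_smul, haf, hFk]
      module
    · simp only [LinearMap.sub_apply, LinearMap.smul_apply, LinearMap.comp_apply,
        LinearMap.proj_apply, LinearMap.single_apply, LinearMap.id_apply]
      rcases Finset.mem_insert.1 hj with rfl | hj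
      · simp only [ha, map_smul, Pi.single_smul]
        module
      · have hkj : k ≠ j := fun h => hk (h ▸ hj)
        simp only [hT j hj, Pi.smul_apply, Pi.single_eq_of_ne hkj, smul_zero, map_zero,
          Pi.single_zero]
        module

lemma exists_left_inverse_pi {f : ∀ i, M i →ₗ[R] E i} (hf : ∀ i, USInjEnvelope S (f i))
    {α : (∀ i, E i) →ₗ[R] ∀ i, E i} {s : R} (hs : s ∈ S)
    (hα : ∀ m : ∀ i, M i, α (fun i => f i (m i)) = s • fun i => f i (m i)) :
    ∃ t ∈ S, ∃ β : (∀ i, E i) →ₗ[R] ∀ i, E i, ∀ x, β (α x) = t • x := by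
  obtain ⟨t, ht, β, -, hβ⟩ := exists_left_inverse_on hf hs hα Finset.univ
  refine ⟨t, ht, β, fun x => ?_⟩
  have h : β ∘ₗ α = t • LinearMap.id :=
    LinearMap.pi_ext fun j y => hβ j (Finset.mem_univ j) y
  exact LinearMap.congr_fun h x

end FiniteFamily

/-- Theorem: if `fᵢ : Mᵢ → Eᵢ` is a u-S-injective u-S-envelope for each `i = 1, …, n`,
then the direct sum map `⊕ᵢ fᵢ : ⊕ᵢ Mᵢ → ⊕ᵢ Eᵢ` is a u-S-injective u-S-envelope of
`⊕ᵢ Mᵢ` (hence `E_{u-S}(⊕ᵢ Mᵢ)` is u-S-isomorphic to `⊕ᵢ E_{u-S}(Mᵢ)`). -/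
theorem uSInjEnvelope_finite_directSum {R : Type u} [CommRing R] [Nontrivial R]
    (S : Submonoid R) (hS0 : (0 : R) ∉ S) {n : ℕ} {M E : Fin n → Type u}
    [∀ i, AddCommGroup (M i)] [∀ i, Module R (M i)]
    [∀ i, AddCommGroup (E i)] [∀ i, Module R (E i)]
    (f : ∀ i, M i →ₗ[R] E i) (hf : ∀ i, USInjEnvelope S (f i)) :
    USInjEnvelope S
      (LinearMap.pi (fun i => (f i) ∘ₗ LinearMap.proj i) :
        (∀ i, M i) →ₗ[R] ∀ i, E i) := by
  refine ⟨USInjPreenvelope.pi fun i => (hf i).1, ?_⟩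
  rintro α ⟨s, hs, hα⟩
  have hαF : ∀ m : ∀ i, M i, α (fun i => f i (m i)) = s • fun i => f i (m i) :=
    fun m => (LinearMap.congr_fun hα m).symm
  obtain ⟨t, ht, β, hβ⟩ := exists_left_inverse_pi hf hs hαF
  -- `s • β` also acts as a scalar of `S` on the range of `⊕ fᵢ`, so it has a left inverse too.
  obtain ⟨r, hr, γ, hγ⟩ := exists_left_inverse_pi (α := s • β) hf ht fun m => by
    rw [LinearMap.smul_apply, ← map_smul, ← hαF, hβ]
  simp only [LinearMap.smul_apply] at hγ
  refine ⟨⟨t, ht, fun x hx => ?_⟩,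
    ⟨r * s * t, S.mul_mem (S.mul_mem hr hs) ht, fun y => ⟨(r * s) • β y, ?_⟩⟩⟩
  · rw [← hβ, LinearMap.mem_ker.1 hx, map_zero]
  · -- `r • α = γ ∘ (s • β) ∘ α = (s * t) • γ`, evaluated at `s • β y`.
    rw [mul_smul, map_smul, ← hγ, hβ, map_smul, map_smul, map_smul, smul_comm s t,
      ← map_smul γ s, hγ]
    module
end

section
/- Let R be a commutative ring that is u-S-Noetherian, S a regular multiplicative subset of R (i.e., every element of S is a nonzerodivisor of R), and (M_α)_{α ∈ A} a family of prime R-modules. For each α ∈ A let E_α be an injective R-module containing M_α as an essential submodule (an injective envelope of M_α), and set E = ⊕_{α∈A} E_α. If tor_S(E) is u-S-torsion, then the direct sum of the inclusions ⊕_{α∈A} M_α → ⊕_{α∈A} E_α is a u-S-injective u-S-envelope of ⊕_{α∈A} M_α; in particular, E_{u-S}(⊕_{α∈A} M_α) is u-S-isomorphic to ⊕_{α∈A} E_α. -/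
/-!
The point is that the hypothesis on torsion forces `S` to act bijectively on `E = ⨁ a, E a`. Each
`E a` is injective and `S` is regular, so every `E a` is `S`-divisible
(`exists_smul_eq_of_injective`); a divisible torsion module killed by a single element of `S` is
zero, so `E` is `S`-torsion-free.

Over a u-S-Noetherian ring this makes `E` an injective module in the ordinary sense
(`baer_directSum`): by Baer's criterion one has to extend a map `h : I → E` from an ideal. Choose a
finitely generated `J ≤ I` with `s • I ≤ J`. The image of `J` lies in a finite subsum of `E`, hence
so does that of `I`, as `s` is injective on every `E a`; now extend the finitely many coordinates
separately. Being injective and `S`-torsion-free, `E` is u-S-injective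
(`isUSInjective_of_baer`), and the preenvelope property is immediate since the direct sum of the
inclusions is injective.

For the envelope property, `⨁ a, M a` is essential in `E` (`exists_smul_mem_directSum`). If an
endomorphism `α` acts on it as `s ∈ S`, then `ker α` meets it trivially, so `α` is injective and has
a left inverse `g`, as `E` is injective. The kernel of `g` meets `⨁ a, M a` trivially too, so `g` is
injective and `α` is bijective.
-/

open DirectSum

universe u

/-- `R` is u-S-Noetherian: there is `s ∈ S` such that every ideal `I` of `R` admits a
finitely generated subideal `J ⊆ I` with `s • I ⊆ J`. -/
def USNoetherian (R : Type*) [CommRing R] (S : Submonoid R) : Prop :=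
  ∃ s ∈ S, ∀ I : Ideal R, ∃ J : Ideal R, J ≤ I ∧ J.FG ∧ ∀ x ∈ I, s • x ∈ J

/-- Injective modules are divisible by nonzerodivisors. -/
theorem exists_smul_eq_of_injective {R : Type u} [CommRing R] {Q : Type u} [AddCommGroup Q]
    [Module R Q] (hQ : Module.Injective R Q) {s : R} (hs : s ∈ nonZeroDivisors R) (x : Q) :
    ∃ y : Q, s • y = x := by
  have hinj : Function.Injective (LinearMap.mulLeft R s) := by
    intro a b hab
    exact (mul_cancel_left_mem_nonZeroDivisors hs).1 hab
  obtain ⟨h, hh⟩ := hQ.out (LinearMap.mulLeft R s) hinj (LinearMap.toSpanSingleton R Q x)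
  refine ⟨h 1, ?_⟩
  rw [← map_smul]
  simpa using hh 1

/-- Over a u-S-Noetherian ring, a direct sum of `S`-torsion-free injective modules satisfies
Baer's criterion. -/
theorem baer_directSum {R : Type u} [CommRing R] (S : Submonoid R) (hNoeth : USNoetherian R S)
    {ι : Type u} {E : ι → Type u} [∀ a, AddCommGroup (E a)] [∀ a, Module R (E a)]
    (hinj : ∀ a, Module.Injective R (E a))
    (htf : ∀ a, ∀ s ∈ S, ∀ x : E a, s • x = 0 → x = 0) :
    Module.Baer R (⨁ a, E a) := by
  classical
  intro I h
  obtain ⟨s, hs, hJ⟩ := hNoeth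
  obtain ⟨J, hJI, ⟨T, hT⟩, hsJ⟩ := hJ I
  -- the coordinates that occur in the values of `h` on the generators `T` of `J`
  let F : Finset ι := T.attach.biUnion fun t =>
    (h ⟨t.1, hJI (hT ▸ Submodule.subset_span t.2)⟩).support
  have hF : ∀ a ∉ F, ∀ x (hx : x ∈ I), h ⟨x, hx⟩ a = 0 := by
    intro a ha
    have hzero : ∀ x (hx : x ∈ J), h ⟨x, hJI hx⟩ a = 0 := by
      have hle : J ≤ (LinearMap.ker (DirectSum.component R ι E a ∘ₗ h)).map I.subtype := by
        rw [← hT]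
        refine Submodule.span_le.2 fun t ht => ?_
        have htI : t ∈ I := hJI (hT ▸ Submodule.subset_span ht)
        refine ⟨⟨t, htI⟩, ?_, rfl⟩
        by_contra hne
        refine ha (Finset.mem_biUnion.2 ⟨⟨t, ht⟩, Finset.mem_attach _ _, ?_⟩)
        exact DFinsupp.mem_support_iff.2 hne
      intro x hx
      obtain ⟨y, hy, hyx⟩ := hle hx
      have : y = ⟨x, hJI hx⟩ := Subtype.ext hyx
      subst this
      exact hy
    intro x hx
    refine htf a s hs _ ?_
    have h1 := hzero _ (hsJ x hx)
    have h2 : (⟨s • x, hJI (hsJ x hx)⟩ : I) = s • ⟨x, hx⟩ := rfl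
    rw [h2, map_smul] at h1
    exact h1
  choose g hg using fun a =>
    Module.Baer.of_injective (hinj a) I (DirectSum.component R ι E a ∘ₗ h)
  refine ⟨LinearMap.toSpanSingleton R _ (DFinsupp.mk F fun a => g a 1), fun x hx => ?_⟩
  refine DFinsupp.ext fun a => ?_
  change x • (DFinsupp.mk F (fun a => g a 1) : Π₀ a, E a) a = h ⟨x, hx⟩ a
  rw [DFinsupp.mk_apply]
  split_ifs with ha
  · rw [← map_smul, smul_eq_mul, mul_one]
    exact hg a x hx
  · rw [smul_zero, hF a ha x hx]

/-- An injective `S`-torsion-free module is u-S-injective: a map into it kills the kernel of any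
u-S-monomorphism, hence factors through its range. -/
theorem isUSInjective_of_baer {R : Type u} [CommRing R] (S : Submonoid R) {Q : Type u}
    [AddCommGroup Q] [Module R Q] (hQ : Module.Baer R Q)
    (htf : ∀ s ∈ S, ∀ x : Q, s • x = 0 → x = 0) : IsUSInjective S Q := by
  intro A B _ _ _ _ f ⟨s, hs, hker⟩
  refine ⟨1, S.one_mem, fun h => ?_⟩
  have hle : LinearMap.ker f ≤ LinearMap.ker h := by
    intro x hx
    refine htf s hs _ ?_
    rw [← map_smul, hker x hx, map_zero]
  obtain ⟨g, hg⟩ := hQ.extension_property ((LinearMap.ker f).liftQ f le_rfl)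
    (LinearMap.ker_eq_bot.1 (Submodule.ker_liftQ_eq_bot _ _ _ le_rfl))
    ((LinearMap.ker f).liftQ h hle)
  refine ⟨g, ?_⟩
  ext x
  simpa using (LinearMap.congr_fun hg (Submodule.Quotient.mk x)).symm

/-- The direct sum of essential submodules is essential, stated elementwise: every nonzero element
has a nonzero multiple with all coordinates in the `M a`. -/
theorem exists_smul_mem_directSum {R : Type u} [CommRing R] {ι : Type u} {E : ι → Type u}
    [∀ a, AddCommGroup (E a)] [∀ a, Module R (E a)] (M : ∀ a, Submodule R (E a))
    (hess : ∀ a, EssentialSub (M a)) (x : ⨁ a, E a) (hx : x ≠ 0) :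
    ∃ r : R, r • x ≠ 0 ∧ ∀ a, (r • x) a ∈ M a := by
  classical
  have key : ∀ F : Finset ι, ∃ r : R, r • x ≠ 0 ∧ ∀ a ∈ F, (r • x) a ∈ M a := by
    intro F
    induction F using Finset.induction_on with
    | empty => exact ⟨1, by simpa using hx, by simp⟩
    | insert b F _ ih =>
      obtain ⟨r, hr, hrF⟩ := ih
      by_cases hb : (r • x) b = 0
      · refine ⟨r, hr, fun a ha => ?_⟩
        rcases Finset.mem_insert.1 ha with rfl | ha
        · rw [hb]; exact zero_mem _
        · exact hrF a ha
      · have hspan : M b ⊓ Submodule.span R {(r • x) b} ≠ ⊥ := fun h =>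
          hb (Submodule.span_singleton_eq_bot.1 (hess b _ h))
        obtain ⟨y, ⟨hyM, hyS⟩, hy0⟩ := Submodule.exists_mem_ne_zero_of_ne_bot hspan
        obtain ⟨c, rfl⟩ := Submodule.mem_span_singleton.1 hyS
        refine ⟨c * r, fun h0 => hy0 ?_, fun a ha => ?_⟩
        · rw [mul_smul] at h0
          exact congrArg (fun z : ⨁ a, E a => z b) h0
        · rw [mul_smul]
          rcases Finset.mem_insert.1 ha with rfl | ha
          · exact hyM
          · exact (M a).smul_mem c (hrF a ha)
  obtain ⟨r, hr, hM⟩ := key (DFinsupp.support x)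
  refine ⟨r, hr, fun a => ?_⟩
  by_cases ha : a ∈ DFinsupp.support x
  · exact hM a ha
  · have : (r • x) a = r • x a := rfl
    rw [this, DFinsupp.notMem_support_iff.1 ha, smul_zero]
    exact zero_mem _

/-- Theorem (thmN): let `R` be u-S-Noetherian, `S` a regular multiplicative subset, and
`(M a)` a family of prime modules with injective envelopes `M a ≤ E a` (`E a` injective
and `M a` essential in `E a`).  If `tor_S(⊕ₐ E a)` is u-S-torsion, then the direct sum
of the inclusions `⊕ₐ M a → ⊕ₐ E a` is a u-S-injective u-S-envelope of `⊕ₐ M a`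
(hence `E_{u-S}(⊕ₐ M a)` is u-S-isomorphic to `⊕ₐ E a`). -/
theorem uSInjEnvelope_directSum_of_prime {R : Type u} [CommRing R] [Nontrivial R]
    (S : Submonoid R) (hS0 : (0 : R) ∉ S) (hreg : S ≤ nonZeroDivisors R)
    (hNoeth : USNoetherian R S) {ι : Type u} {E : ι → Type u}
    [∀ a, AddCommGroup (E a)] [∀ a, Module R (E a)]
    (M : ∀ a, Submodule R (E a))
    (hprime : ∀ a, IsPrimeModule R (M a))
    (hinj : ∀ a, Module.Injective R (E a))
    (hess : ∀ a, EssentialSub (M a))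
    (htor : ∃ s ∈ S, ∀ x : (⨁ (a : ι), E a), (∃ t ∈ S, t • x = 0) → s • x = 0) :
    USInjEnvelope S
      (DFinsupp.mapRange.linearMap (fun a => (M a).subtype) :
        (⨁ (a : ι), ↥(M a)) →ₗ[R] (⨁ (a : ι), E a)) := by
  classical
  obtain ⟨s₀, hs₀, htor⟩ := htor
  have htf : ∀ a, ∀ s ∈ S, ∀ x : E a, s • x = 0 → x = 0 := by
    intro a t ht x hx
    -- a torsion `x = s₀ • y` vanishes, because `y` is torsion as well
    obtain ⟨y, rfl⟩ := exists_smul_eq_of_injective (hinj a) (hreg hs₀) x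
    have h := htor (DirectSum.lof R ι E a y) ⟨t * s₀, S.mul_mem ht hs₀, by
      rw [← map_smul, mul_smul, hx, map_zero]⟩
    rw [← map_smul] at h
    simpa using congrArg (DirectSum.component R ι E a) h
  have htfE : ∀ s ∈ S, ∀ x : (⨁ a, E a), s • x = 0 → x = 0 := by
    intro s hs x hx
    refine DFinsupp.ext fun a => htf a s hs _ ?_
    exact congrArg (fun z : ⨁ a, E a => z a) hx
  have hbaer : Module.Baer R (⨁ a, E a) := baer_directSum S hNoeth hinj htf
  set f : (⨁ (a : ι), ↥(M a)) →ₗ[R] (⨁ (a : ι), E a) :=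
    DFinsupp.mapRange.linearMap (fun a => (M a).subtype) with hf
  have hfa : ∀ x a, f x a = (x a : E a) := fun _ _ => rfl
  have hfinj : Function.Injective f := by
    intro x y hxy
    refine DFinsupp.ext fun a => Subtype.ext ?_
    rw [← hfa, ← hfa, hxy]
  refine ⟨⟨isUSInjective_of_baer S hbaer htfE, fun E' _ _ hE' => hE' _ _ f ⟨1, S.one_mem, ?_⟩⟩, ?_⟩
  · intro x hx
    rw [one_smul]
    exact hfinj (by rw [LinearMap.mem_ker.1 hx, map_zero])
  -- essentiality, as a criterion for injectivity of maps out of `E`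
  have hcrit : ∀ β : (⨁ a, E a) →ₗ[R] (⨁ a, E a), (∀ m, β (f m) = 0 → f m = 0) →
      Function.Injective β := by
    intro β hβ
    rw [← LinearMap.ker_eq_bot, LinearMap.ker_eq_bot']
    intro x hx
    by_contra hx0
    obtain ⟨r, hr, hrM⟩ := exists_smul_mem_directSum M hess x hx0
    have hmem : ∃ m, f m = r • x := by
      refine ⟨DFinsupp.mk (DFinsupp.support (r • x)) fun a => ⟨(r • x) a, hrM a⟩, ?_⟩
      refine DFinsupp.ext fun a => ?_
      change ((DFinsupp.mk (DFinsupp.support (r • x))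
        (fun a => ⟨(r • x) a, hrM a⟩) : Π₀ a, M a) a : E a) = (r • x) a
      rw [DFinsupp.mk_apply]
      split_ifs with ha
      · rfl
      · exact (DFinsupp.notMem_support_iff.1 ha).symm
    obtain ⟨m, hm⟩ := hmem
    refine hr (hm ▸ hβ m ?_)
    rw [hm, map_smul, hx, smul_zero]
  rintro α ⟨s, hs, hα⟩
  have hαf : ∀ m, α (f m) = s • f m := fun m => (LinearMap.congr_fun hα m).symm
  have hαinj : Function.Injective α :=
    hcrit α fun m hm => htfE s hs _ (by rw [← hαf, hm])
  obtain ⟨g, hg⟩ := hbaer.extension_property α hαinj LinearMap.id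
  have hgα : ∀ x, g (α x) = x := fun x => LinearMap.congr_fun hg x
  have hginj : Function.Injective g := hcrit g fun m hm => by
    rw [← hgα (f m), hαf, map_smul, hm, smul_zero]
  refine ⟨⟨1, S.one_mem, fun x hx => ?_⟩, ⟨1, S.one_mem, fun y => ⟨g y, ?_⟩⟩⟩
  · rw [one_smul]
    exact hαinj (by rw [LinearMap.mem_ker.1 hx, map_zero])
  · rw [one_smul]
    exact hginj (hgα (g y))
end
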